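/- Let V : ℝ → ℝ be measurable with ∫_ℝ (1 + |t|) |V(t)| dt < ∞. With η(u) = ∫_u^∞ |V(t)| dt, γ_1(x) = ∫_x^∞ (t-x)|V(t)| dt, and the iterates K_0(x,y) = ∫_{x+y}^∞ V(t) dt, K_{n+1}(x,y) = ∫_0^y ∫_{x+y-z}^∞ V(t) K_n(t,z) dt dz, the series B_1(x,y) = Σ_{n≥0} K_n(x,y) converges absolutely for every x ≥ 0, y ≥ 0, and satisfies the bound |B_1(x,y)| ≤ e^{γ_1(x)} ∫_{x+y}^∞ |V(t)| dt. -/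

import Mathlib

open MeasureTheory Set

/-- `η(u) = ∫_u^∞ |V(t)| dt`. -/
noncomputable def etaV (V : ℝ → ℝ) (u : ℝ) : ℝ := ∫ t in Ioi u, |V t|

/-- `γ₁(x) = ∫_x^∞ (t - x)|V(t)| dt`. -/
noncomputable def gammaOne (V : ℝ → ℝ) (x : ℝ) : ℝ := ∫ t in Ioi x, (t - x) * |V t|

/-- The Deift–Trubowitz iterates: `K₀(x,y) = ∫_{x+y}^∞ V(t) dt` and
`K_{n+1}(x,y) = ∫_0^y ∫_{x+y-z}^∞ V(t) Kₙ(t,z) dt dz`. -/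
noncomputable def DTiter (V : ℝ → ℝ) : ℕ → ℝ → ℝ → ℝ
  | 0, x, y => ∫ t in Ioi (x + y), V t
  | n + 1, x, y => ∫ z in Ioc (0 : ℝ) y, ∫ t in Ioi (x + y - z), V t * DTiter V n t z

lemma DT_int (V : ℝ → ℝ) (hV : Measurable V)
    (hV1 : Integrable (fun t => (1 + |t|) * |V t|)) : Integrable (fun t => |V t|) := by
  refine hV1.mono' (by fun_prop) (Filter.Eventually.of_forall fun t => ?_)
  rw [Real.norm_eq_abs, abs_abs]
  nlinarith [abs_nonneg t, abs_nonneg (V t), mul_nonneg (abs_nonneg t) (abs_nonneg (V t))]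

lemma DT_int2 (V : ℝ → ℝ) (hV : Measurable V)
    (hV1 : Integrable (fun t => (1 + |t|) * |V t|)) (x : ℝ) :
    Integrable (fun t => max (t - x) 0 * |V t|) := by
  refine (hV1.const_mul (1 + |x|)).mono' (by fun_prop) (Filter.Eventually.of_forall fun t => ?_)
  rw [Real.norm_eq_abs, abs_mul, abs_abs, abs_of_nonneg (le_max_right _ _), ← mul_assoc]
  refine mul_le_mul_of_nonneg_right ?_ (abs_nonneg _)
  refine max_le ?_ (by positivity)
  nlinarith [abs_nonneg t, abs_nonneg x, mul_nonneg (abs_nonneg t) (abs_nonneg x), le_abs_self t,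
    neg_abs_le x]

lemma DT_gamma_eq (V : ℝ → ℝ) (x : ℝ) :
    gammaOne V x = ∫ t, max (t - x) 0 * |V t| := by
  unfold gammaOne
  rw [← integral_indicator measurableSet_Ioi]
  congr 1
  ext t
  by_cases h : x < t
  · rw [indicator_of_mem (show t ∈ Ioi x from h), max_eq_left (by linarith)]
  · rw [indicator_of_notMem (show t ∉ Ioi x from h), max_eq_right (by linarith), zero_mul]

lemma DT_gamma_deriv (V : ℝ → ℝ) (hV : Measurable V)
    (hV1 : Integrable (fun t => (1 + |t|) * |V t|)) (x : ℝ) :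
    HasDerivAt (gammaOne V) (-etaV V x) x := by
  have h := hasDerivAt_integral_of_dominated_loc_of_lip (μ := volume) (𝕜 := ℝ)
    (F := fun x t => max (t - x) 0 * |V t|) (x₀ := x) (s := univ) (bound := fun t => |V t|)
    (F' := (Ioi x).indicator (fun t => -|V t|)) Filter.univ_mem
    (Filter.Eventually.of_forall fun y => by fun_prop)
    (DT_int2 V hV hV1 x)
    ((Measurable.indicator (by fun_prop) measurableSet_Ioi).aestronglyMeasurable)
    (Filter.Eventually.of_forall fun t => by
      refine LipschitzOnWith.of_dist_le_mul fun a _ b _ => ?_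
      simp only [Real.dist_eq, Real.coe_nnabs, abs_abs]
      rw [← sub_mul, abs_mul, abs_abs, mul_comm]
      refine mul_le_mul_of_nonneg_left ?_ (abs_nonneg _)
      refine (abs_max_sub_max_le_abs _ _ _).trans (le_of_eq ?_)
      rw [abs_sub_comm a b]
      congr 1
      ring)
    (DT_int V hV hV1)
    (by
      filter_upwards [Measure.ae_ne volume x] with t ht
      rcases lt_or_gt_of_ne ht with h | h
      · rw [indicator_of_notMem (by simpa using h.le)]
        refine (hasDerivAt_const x (0 : ℝ)).congr_of_eventuallyEq ?_
        filter_upwards [lt_mem_nhds h] with y hy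
        rw [max_eq_right (by linarith), zero_mul]
      · rw [indicator_of_mem (show t ∈ Ioi x from h)]
        have h1 : HasDerivAt (fun y => (t - y) * |V t|) (-|V t|) x := by
          simpa using ((hasDerivAt_id x).const_sub t).mul_const (|V t|)
        refine h1.congr_of_eventuallyEq ?_
        filter_upwards [gt_mem_nhds h] with y hy
        rw [max_eq_left (by linarith)])
  have h2 := h.2
  rw [integral_indicator measurableSet_Ioi, integral_neg] at h2
  exact h2.congr_of_eventuallyEq (Filter.Eventually.of_forall fun y => DT_gamma_eq V y)

lemma DT_eta_nonneg (V : ℝ → ℝ) (x : ℝ) : 0 ≤ etaV V x :=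
  integral_nonneg fun _ => abs_nonneg _

lemma DT_gamma_nonneg (V : ℝ → ℝ) (x : ℝ) : 0 ≤ gammaOne V x := by
  rw [DT_gamma_eq]
  exact integral_nonneg fun _ => mul_nonneg (le_max_right _ _) (abs_nonneg _)

lemma DT_gamma_anti (V : ℝ → ℝ) (hV : Measurable V)
    (hV1 : Integrable (fun t => (1 + |t|) * |V t|)) : Antitone (gammaOne V) := by
  refine antitone_of_hasDerivAt_nonpos (fun x => DT_gamma_deriv V hV hV1 x) fun x => ?_
  exact neg_nonpos.mpr (DT_eta_nonneg V x)

lemma DT_eta_anti (V : ℝ → ℝ) (hi : Integrable (fun t => |V t|)) : Antitone (etaV V) := by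
  intro a b hab
  exact setIntegral_mono_set hi.integrableOn (Filter.Eventually.of_forall fun _ => abs_nonneg _)
    (Ioi_subset_Ioi hab).eventuallyLE

lemma DT_eta_cont (V : ℝ → ℝ) (hi : Integrable (fun t => |V t|)) : Continuous (etaV V) := by
  have h : etaV V = fun u => etaV V 0 - ∫ t in (0:ℝ)..u, |V t| := by
    ext u
    rw [← intervalIntegral.integral_Ioi_sub_Ioi' hi.integrableOn hi.integrableOn]
    simp [etaV]
  rw [h]
  exact continuous_const.sub
    (intervalIntegral.continuous_primitive (fun a b => hi.intervalIntegrable) 0)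

lemma DT_iter_bound (V : ℝ → ℝ) (hV : Measurable V)
    (hV1 : Integrable (fun t => (1 + |t|) * |V t|)) (n : ℕ) : ∀ x y : ℝ, 0 ≤ y →
      |DTiter V n x y| ≤ gammaOne V x ^ n / n.factorial * etaV V (x + y) := by
  have hi := DT_int V hV hV1
  have hγc : Continuous (gammaOne V) :=
    continuous_iff_continuousAt.mpr fun x => (DT_gamma_deriv V hV hV1 x).continuousAt
  have hηc := DT_eta_cont V hi
  induction n with
  | zero =>
    intro x y hy
    simp only [DTiter, pow_zero, Nat.factorial_zero, Nat.cast_one, div_one, one_mul, etaV]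
    exact abs_integral_le_integral_abs
  | succ n ih =>
    intro x y hy
    have hder : ∀ z : ℝ, HasDerivAt
        (fun z => gammaOne V (x + y - z) ^ (n + 1) / (n + 1).factorial * etaV V (x + y))
        (gammaOne V (x + y - z) ^ n / n.factorial * etaV V (x + y) * etaV V (x + y - z)) z := by
      intro z
      have h1 : HasDerivAt (fun z => gammaOne V (x + y - z)) (etaV V (x + y - z)) z := by
        have := (DT_gamma_deriv V hV hV1 (x + y - z)).comp z ((hasDerivAt_id z).const_sub (x + y))
        simpa [Function.comp_def] using this
      have h2 := ((h1.pow (n + 1)).div_const ((n + 1).factorial : ℝ)).mul_const (etaV V (x + y))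
      refine h2.congr_deriv ?_
      rw [Nat.factorial_succ]
      have : (n.factorial : ℝ) ≠ 0 := by positivity
      have : ((n : ℝ) + 1) ≠ 0 := by positivity
      push_cast
      try simp only [Nat.add_sub_cancel]
      field_simp
    have hcont : Continuous fun z =>
        gammaOne V (x + y - z) ^ n / n.factorial * etaV V (x + y) * etaV V (x + y - z) := by
      fun_prop
    have hftc := intervalIntegral.integral_eq_sub_of_hasDerivAt (a := 0) (b := y)
      (fun z _ => hder z) (hcont.intervalIntegrable 0 y)
    rw [intervalIntegral.integral_of_le hy] at hftc
    have hb : ‖DTiter V (n + 1) x y‖ ≤ ∫ z in Ioc 0 y,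
        gammaOne V (x + y - z) ^ n / n.factorial * etaV V (x + y) * etaV V (x + y - z) := by
      simp only [DTiter]
      refine norm_integral_le_of_norm_le
        ((hcont.intervalIntegrable 0 y).1) ?_
      refine (ae_restrict_mem measurableSet_Ioc).mono fun z hz => ?_
      have hz' : 0 ≤ z := hz.1.le
      rw [show etaV V (x + y - z) = ∫ t in Ioi (x + y - z), |V t| from rfl,
        ← integral_const_mul]
      refine norm_integral_le_of_norm_le (hi.integrableOn.const_mul _) ?_
      refine (ae_restrict_mem measurableSet_Ioi).mono fun t ht => ?_
      have ht' : x + y - z ≤ t := le_of_lt ht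
      rw [norm_mul, Real.norm_eq_abs, Real.norm_eq_abs, mul_comm]
      refine mul_le_mul_of_nonneg_right ((ih t z hz').trans ?_) (abs_nonneg _)
      have g1 := DT_gamma_anti V hV hV1 ht'
      have g2 := DT_eta_anti V hi (show x + y ≤ t + z by linarith)
      have g3 := DT_gamma_nonneg V t
      have g4 := DT_gamma_nonneg V (x + y - z)
      have g5 := DT_eta_nonneg V (t + z)
      gcongr
    rw [hftc] at hb
    rw [Real.norm_eq_abs] at hb
    refine hb.trans ?_
    have g3 := DT_gamma_nonneg V (x + y)
    have g5 := DT_eta_nonneg V (x + y)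
    simp only [add_sub_cancel_right, sub_zero]
    refine sub_le_self _ (by positivity)

/-- Convergence of the Deift–Trubowitz series and the bound (A.2) of the paper: for `V` with
`∫ (1+|t|)|V(t)| dt < ∞`, the series `B₁(x,y) = Σₙ Kₙ(x,y)` converges absolutely for all
`x, y ≥ 0` and `|B₁(x,y)| ≤ e^{γ₁(x)} ∫_{x+y}^∞ |V(t)| dt`. -/
theorem DT_series_bound (V : ℝ → ℝ) (hV : Measurable V)
    (hV1 : MeasureTheory.Integrable (fun t => (1 + |t|) * |V t|)) :
    ∀ x : ℝ, 0 ≤ x → ∀ y : ℝ, 0 ≤ y →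
      Summable (fun n : ℕ => |DTiter V n x y|) ∧
      |∑' n : ℕ, DTiter V n x y| ≤ Real.exp (gammaOne V x) * ∫ t in Set.Ioi (x + y), |V t| := by
  intro x _ y hy
  have hb := fun n => DT_iter_bound V hV hV1 n x y hy
  have hs : HasSum (fun n : ℕ => gammaOne V x ^ n / n.factorial * etaV V (x + y))
      (Real.exp (gammaOne V x) * etaV V (x + y)) := by
    have := NormedSpace.expSeries_div_hasSum_exp (gammaOne V x)
    rw [← Real.exp_eq_exp_ℝ] at this
    exact this.mul_right _
  refine ⟨Summable.of_nonneg_of_le (fun _ => abs_nonneg _) hb hs.summable, ?_⟩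
  have h3 := tsum_of_norm_bounded (f := fun n => DTiter V n x y) hs hb
  exact h3
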